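/- arXiv:2505.22321 — 2 statements merged into one kernel-verified Lean document; each statement's English description precedes it below -/
import Mathlib

section
/- Let {G, (Γ0, Γ1), (Γ̃0, Γ̃1)} be a generalized boundary triple for the adjoint pair {S, S̃} with core {T, T̃} of {S*, S̃*}, and assume ρ(A0) ≠ ∅. Then for every λ ∈ ρ(A0) the restriction of Γ0 to ker(T − λ) = {f ∈ dom T : Tf = λf} is a bijection from ker(T − λ) onto G, and its inverse γ(λ) := (Γ0↾ker(T − λ))^{-1} is an everywhere defined bounded operator from G to H; that is, there exists C ≥ 0 such that ‖f‖_H ≤ C ‖Γ0 f‖_G for all f ∈ ker(T − λ). Analogously, for every μ ∈ ρ(Ã0) the restriction of Γ̃0 to ker(T̃ − μ) is a bijection onto G with bounded inverse γ̃(μ). -/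
/-!
If `lam ∈ ρ(A0)`, then `T - lam` maps `ker Γ0` bijectively onto `H`, so that
`dom T = ker Γ0 ∔ ker (T - lam)`; read from the side of `Γ0`, this decomposition says that `Γ0` maps
`ker (T - lam)` bijectively onto `G`.

The Green identity gives `((Ã0 - conj lam) k, f) = (Γ̃1 k, Γ0 f)` for `f ∈ ker (T - lam)` and
`k ∈ dom Ã0`, that is, `γ(lam)* = Γ̃1 (Ã0 - conj lam)⁻¹`. As `Ã0 - conj lam = (A0 - lam)*` is
surjective, the adjoint of `γ(lam)` is everywhere defined, and `γ(lam)` is bounded by the uniform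
boundedness principle.
-/

open scoped ComplexInnerProductSpace

noncomputable section

/-- The inner product in the convention of the paper: linear in the *first* argument and
conjugate-linear in the second (the opposite of Mathlib's convention). -/
def pinner {E : Type*} [NormedAddCommGroup E] [InnerProductSpace ℂ E] (x y : E) : ℂ :=
  ⟪y, x⟫

variable {H G : Type*}
  [NormedAddCommGroup H] [InnerProductSpace ℂ H] [CompleteSpace H]
  [NormedAddCommGroup G] [InnerProductSpace ℂ G] [CompleteSpace G]

/-- The restriction of a partially defined linear operator `T` in `H` to a submodule `p` of its
domain, viewed again as a partially defined linear operator in `H`. -/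
def LinearPMap.restrictTo (T : H →ₗ.[ℂ] H) (p : Submodule ℂ T.domain) : H →ₗ.[ℂ] H where
  domain := p.map T.domain.subtype
  toFun := T.toFun ∘ₗ p.subtype ∘ₗ
    (Submodule.equivMapOfInjective T.domain.subtype (Submodule.injective_subtype _)
      p).symm.toLinearMap

/-- `R` is the (everywhere defined, bounded) resolvent of the operator `A` at the point `lam`,
i.e. `R` is a two-sided inverse of `A - lam`. -/
def ResolventAt (A : H →ₗ.[ℂ] H) (lam : ℂ) (R : H →L[ℂ] H) : Prop :=
  (∀ x : A.domain, R (A x - lam • (x : H)) = (x : H)) ∧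
  (∀ h : H, ∃ x : A.domain, (x : H) = R h ∧ A x - lam • (x : H) = h)

/-- `lam` belongs to the resolvent set of `A`: `A - lam` is a bijection of `dom A` onto `H`
with a bounded everywhere defined inverse. -/
def InResolventSet (A : H →ₗ.[ℂ] H) (lam : ℂ) : Prop :=
  ∃ R : H →L[ℂ] H, ResolventAt A lam R

/-- `{G, (Γ0, Γ1), (Γt0, Γt1)}` is a generalized boundary triple for the adjoint pair `{S, St}`
with core `{T, Tt}` of `{S*, St*}`. -/
structure IsGeneralizedBoundaryTriple (S St T Tt : H →ₗ.[ℂ] H)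
    (Γ0 Γ1 : T.domain →ₗ[ℂ] G) (Γt0 Γt1 : Tt.domain →ₗ[ℂ] G) : Prop where
  dense_S : Dense (S.domain : Set H)
  dense_St : Dense (St.domain : Set H)
  closed_S : S.IsClosed
  closed_St : St.IsClosed
  adjoint_pair : ∀ (f : S.domain) (g : St.domain),
    pinner (S f) (g : H) = pinner (f : H) (St g)
  T_le : T ≤ S.adjoint
  Tt_le : Tt ≤ St.adjoint
  T_adjoint : T.adjoint = S
  Tt_adjoint : Tt.adjoint = St
  green : ∀ (f : T.domain) (g : Tt.domain),
    pinner (T f) (g : H) - pinner (f : H) (Tt g)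
      = pinner (Γ1 f) (Γt0 g) - pinner (Γ0 f) (Γt1 g)
  surj_Γ0 : Function.Surjective Γ0
  surj_Γt0 : Function.Surjective Γt0
  A0_adjoint : (T.restrictTo (LinearMap.ker Γ0)).adjoint = Tt.restrictTo (LinearMap.ker Γt0)
  At0_adjoint : (Tt.restrictTo (LinearMap.ker Γt0)).adjoint = T.restrictTo (LinearMap.ker Γ0)

section DirectSum

variable {R M N P : Type*} [Ring R] [AddCommGroup M] [Module R M] [AddCommGroup N] [Module R N]
  [AddCommGroup P] [Module R P]

theorem bijective_domRestrict_iff_isCompl_ker {f : M →ₗ[R] N} (hf : Function.Surjective f)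
    (p : Submodule R M) :
    Function.Bijective (f.domRestrict p) ↔ IsCompl p (LinearMap.ker f) := by
  rw [Function.Bijective, LinearMap.injective_domRestrict_iff,
    LinearMap.surjective_domRestrict_iff hf, isCompl_iff, disjoint_iff, codisjoint_iff, inf_comm]

theorem bijective_domRestrict_ker_swap {f : M →ₗ[R] N} {g : M →ₗ[R] P}
    (hg : Function.Surjective g) (h : Function.Bijective (f.domRestrict (LinearMap.ker g))) :
    Function.Bijective (g.domRestrict (LinearMap.ker f)) := by
  have hf : Function.Surjective f := fun y => (h.surjective y).imp' _ fun _ hx => hx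
  rw [bijective_domRestrict_iff_isCompl_ker hf] at h
  exact (bijective_domRestrict_iff_isCompl_ker hg _).2 h.symm

end DirectSum

theorem exists_norm_le_mul_of_forall_norm_inner_le_mul {𝕜 E ι : Type*} [RCLike 𝕜]
    [NormedAddCommGroup E] [InnerProductSpace 𝕜 E] [CompleteSpace E] {u : ι → E} {r : ι → ℝ}
    (hr : ∀ i, 0 ≤ r i) (h : ∀ y, ∃ M, ∀ i, ‖inner 𝕜 y (u i)‖ ≤ M * r i) :
    ∃ C, 0 ≤ C ∧ ∀ i, ‖u i‖ ≤ C * r i := by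
  have pointwise_bounded (y : E) :
      ∃ M, ∀ i, ‖((((r i)⁻¹ : ℝ) : 𝕜) • innerSL 𝕜 (u i)) y‖ ≤ M := by
    obtain ⟨M, hM⟩ := h y
    refine ⟨|M|, fun i => ?_⟩
    rw [smul_apply, innerSL_apply_apply, norm_smul, norm_inner_symm,
      RCLike.norm_ofReal, abs_of_nonneg (inv_nonneg.2 (hr i))]
    refine inv_mul_le_of_le_mul₀ (hr i) (abs_nonneg M) ((hM i).trans ?_)
    rw [mul_comm]
    exact mul_le_mul_of_nonneg_left (le_abs_self M) (hr i)
  obtain ⟨C, hC⟩ := banach_steinhaus pointwise_bounded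
  refine ⟨|C|, abs_nonneg C, fun i => ?_⟩
  rcases (hr i).eq_or_lt with hri | hri
  · obtain ⟨M, hM⟩ := h (u i)
    have hu : u i = 0 := by simpa [← hri] using hM i
    simp [hu, ← hri]
  · have hCi := hC i
    rw [norm_smul, innerSL_apply_norm, RCLike.norm_ofReal, abs_of_pos (inv_pos.2 hri),
      inv_mul_le_iff₀ hri, mul_comm] at hCi
    exact hCi.trans (mul_le_mul_of_nonneg_right (le_abs_self C) hri.le)

section Shift

variable {R E : Type*} [CommRing R] [AddCommGroup E] [Module R E]

/-- The operator `T - c` as a linear map on `dom T`, so that `ker (T - c)` is a submodule of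
`dom T`. -/
def shift (T : E →ₗ.[R] E) (c : R) : T.domain →ₗ[R] E :=
  T.toFun - c • T.domain.subtype

theorem shift_apply (T : E →ₗ.[R] E) (c : R) (f : T.domain) : shift T c f = T f - c • (f : E) :=
  rfl

theorem mem_ker_shift {T : E →ₗ.[R] E} {c : R} {f : T.domain} :
    f ∈ LinearMap.ker (shift T c) ↔ T f = c • (f : E) := by
  rw [LinearMap.mem_ker, shift_apply, sub_eq_zero]

end Shift

section RestrictTo

omit [CompleteSpace H]

/-- The canonical identification of `p` with the domain of the restriction of `T` to `p`; it turns
`T.restrictTo p` into the linear map `T` on `p`. -/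
def restrictToDomainEquiv (T : H →ₗ.[ℂ] H) (p : Submodule ℂ T.domain) :
    p ≃ₗ[ℂ] (T.restrictTo p).domain :=
  Submodule.equivMapOfInjective T.domain.subtype (Submodule.injective_subtype _) p

theorem restrictTo_restrictToDomainEquiv (T : H →ₗ.[ℂ] H) (p : Submodule ℂ T.domain) (f : p) :
    T.restrictTo p (restrictToDomainEquiv T p f) = T f :=
  congrArg (fun g : p => T g) ((restrictToDomainEquiv T p).symm_apply_apply f)

theorem coe_domRestrict_shift (T : H →ₗ.[ℂ] H) (p : Submodule ℂ T.domain) (c : ℂ) :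
    ⇑((shift T c).domRestrict p) = shift (T.restrictTo p) c ∘ restrictToDomainEquiv T p := by
  funext f
  rw [Function.comp_apply, shift_apply, restrictTo_restrictToDomainEquiv]
  rfl

theorem InResolventSet.bijective_shift {A : H →ₗ.[ℂ] H} {lam : ℂ} (hlam : InResolventSet A lam) :
    Function.Bijective (shift A lam) := by
  obtain ⟨R, left_inv, right_inv⟩ := hlam
  refine ⟨fun x y hxy => Subtype.ext ?_, fun h => (right_inv h).imp fun _ hx => hx.2⟩
  rw [← left_inv x, ← left_inv y]
  exact congrArg R hxy

theorem bijective_domRestrict_ker_shift {G : Type*} [AddCommGroup G] [Module ℂ G] {T : H →ₗ.[ℂ] H}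
    {Γ0 : T.domain →ₗ[ℂ] G} (surj_Γ0 : Function.Surjective Γ0) {lam : ℂ}
    (hlam : InResolventSet (T.restrictTo (LinearMap.ker Γ0)) lam) :
    Function.Bijective (Γ0.domRestrict (LinearMap.ker (shift T lam))) :=
  bijective_domRestrict_ker_swap surj_Γ0 <| by
    rw [coe_domRestrict_shift]
    exact hlam.bijective_shift.comp (restrictToDomainEquiv T _).bijective

end RestrictTo

section Adjoint

-- The adjoint of an operator with non-dense domain is, by convention, zero on its domain.
theorem dense_domain_of_adjoint_adjoint_eq {A : H →ₗ.[ℂ] H} (hA : A.adjoint.adjoint = A) :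
    Dense (A.domain : Set H) := by
  by_contra not_dense
  have mem_domain (y : H) : y ∈ A.domain := by
    rw [← hA]
    refine LinearPMap.mem_adjoint_domain_of_exists y ⟨0, fun x => ?_⟩
    rw [LinearPMap.adjoint_apply_of_not_dense not_dense, inner_zero_left, inner_zero_right]
  exact not_dense fun y => subset_closure (mem_domain y)

theorem InResolventSet.surjective_shift_adjoint {A : H →ₗ.[ℂ] H} {lam : ℂ}
    (hlam : InResolventSet A lam) (hA : Dense (A.domain : Set H)) :
    Function.Surjective (shift A.adjoint (starRingEnd ℂ lam)) := by
  intro h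
  obtain ⟨R, left_inv, -⟩ := hlam
  let k : H := ContinuousLinearMap.adjoint R h
  have inner_k (x : A.domain) : ⟪h + starRingEnd ℂ lam • k, (x : H)⟫ = ⟪k, A x⟫ := by
    have hx : ⟪k, A x - lam • (x : H)⟫ = ⟪h, (x : H)⟫ := by
      rw [ContinuousLinearMap.adjoint_inner_left, left_inv x]
    rw [inner_add_left, inner_smul_left, Complex.conj_conj, ← hx, inner_sub_right,
      inner_smul_right, sub_add_cancel]
  refine ⟨⟨k, LinearPMap.mem_adjoint_domain_of_exists k ⟨_, inner_k⟩⟩, ?_⟩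
  rw [shift_apply, LinearPMap.adjoint_apply_eq hA _ inner_k, add_sub_cancel_right]

theorem surjective_domRestrict_shift_of_adjoint_eq {A T : H →ₗ.[ℂ] H} {p : Submodule ℂ T.domain}
    (hadj : A.adjoint = T.restrictTo p) (hadj' : (T.restrictTo p).adjoint = A) {lam : ℂ}
    (hlam : InResolventSet A lam) :
    Function.Surjective ((shift T (starRingEnd ℂ lam)).domRestrict p) := by
  have dense_A : Dense (A.domain : Set H) :=
    dense_domain_of_adjoint_adjoint_eq (by rw [hadj, hadj'])
  have surj := hlam.surjective_shift_adjoint dense_A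
  rw [hadj] at surj
  rw [coe_domRestrict_shift]
  exact surj.comp (restrictToDomainEquiv T p).surjective

end Adjoint

section Green

omit [CompleteSpace G]

/-- The abstract Green identity for the pair `{T, Tt}` and the boundary maps `(Γ0, Γ1)`,
`(Γt0, Γt1)`, i.e. the field `green` of `IsGeneralizedBoundaryTriple`. -/
def GreenIdentity (T Tt : H →ₗ.[ℂ] H) (Γ0 Γ1 : T.domain →ₗ[ℂ] G) (Γt0 Γt1 : Tt.domain →ₗ[ℂ] G) :
    Prop :=
  ∀ (f : T.domain) (g : Tt.domain),
    pinner (T f) (g : H) - pinner (f : H) (Tt g)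
      = pinner (Γ1 f) (Γt0 g) - pinner (Γ0 f) (Γt1 g)

variable {T Tt : H →ₗ.[ℂ] H} {Γ0 Γ1 : T.domain →ₗ[ℂ] G} {Γt0 Γt1 : Tt.domain →ₗ[ℂ] G}

omit [CompleteSpace H] in
theorem GreenIdentity.symm (green : GreenIdentity T Tt Γ0 Γ1 Γt0 Γt1) :
    GreenIdentity Tt T Γt0 Γt1 Γ0 Γ1 := by
  intro g f
  have conj_green := congrArg (starRingEnd ℂ) (green f g)
  simp only [pinner, map_sub, inner_conj_symm] at conj_green ⊢
  linear_combination -conj_green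

omit [CompleteSpace H] in
theorem GreenIdentity.inner_shift_eq (green : GreenIdentity T Tt Γ0 Γ1 Γt0 Γt1) {lam : ℂ}
    {f : T.domain} (hf : f ∈ LinearMap.ker (shift T lam)) {k : Tt.domain}
    (hk : k ∈ LinearMap.ker Γt0) :
    ⟪shift Tt (starRingEnd ℂ lam) k, (f : H)⟫ = ⟪Γt1 k, Γ0 f⟫ := by
  have green_fk := green f k
  simp only [pinner, LinearMap.mem_ker.1 hk, inner_zero_left, mem_ker_shift.1 hf,
    inner_smul_right] at green_fk
  rw [shift_apply, inner_sub_left, inner_smul_left, Complex.conj_conj]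
  linear_combination -green_fk

theorem GreenIdentity.exists_norm_le_mul_norm (green : GreenIdentity T Tt Γ0 Γ1 Γt0 Γt1) {lam : ℂ}
    (surj : Function.Surjective
      ((shift Tt (starRingEnd ℂ lam)).domRestrict (LinearMap.ker Γt0))) :
    ∃ C : ℝ, 0 ≤ C ∧ ∀ f ∈ LinearMap.ker (shift T lam), ‖(f : H)‖ ≤ C * ‖Γ0 f‖ := by
  have weakly_bounded (h : H) : ∃ M, ∀ f : LinearMap.ker (shift T lam),
      ‖⟪h, ((f : T.domain) : H)⟫‖ ≤ M * ‖Γ0 f‖ := by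
    obtain ⟨k, rfl⟩ := surj h
    refine ⟨‖Γt1 k‖, fun f => ?_⟩
    rw [LinearMap.domRestrict_apply, green.inner_shift_eq f.2 k.2]
    exact norm_inner_le_norm _ _
  obtain ⟨C, hC, bound⟩ :=
    exists_norm_le_mul_of_forall_norm_inner_le_mul (fun _ => norm_nonneg _) weakly_bounded
  exact ⟨C, hC, fun f hf => bound ⟨f, hf⟩⟩

theorem stmt6_general (green : GreenIdentity T Tt Γ0 Γ1 Γt0 Γt1)
    (surj_Γ0 : Function.Surjective Γ0)
    (hadj : (T.restrictTo (LinearMap.ker Γ0)).adjoint = Tt.restrictTo (LinearMap.ker Γt0))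
    (hadj' : (Tt.restrictTo (LinearMap.ker Γt0)).adjoint = T.restrictTo (LinearMap.ker Γ0))
    {lam : ℂ} (hlam : InResolventSet (T.restrictTo (LinearMap.ker Γ0)) lam) :
    (∀ f g : T.domain, T f = lam • (f : H) → T g = lam • (g : H) → Γ0 f = Γ0 g → f = g) ∧
      (∀ h : G, ∃ f : T.domain, T f = lam • (f : H) ∧ Γ0 f = h) ∧
      (∃ C : ℝ, 0 ≤ C ∧ ∀ f : T.domain, T f = lam • (f : H) → ‖(f : H)‖ ≤ C * ‖Γ0 f‖) := by
  obtain ⟨inj, surj⟩ := bijective_domRestrict_ker_shift surj_Γ0 hlam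
  obtain ⟨C, hC, bound⟩ :=
    green.exists_norm_le_mul_norm (surjective_domRestrict_shift_of_adjoint_eq hadj hadj' hlam)
  refine ⟨fun f g hf hg hfg => ?_, fun h => ?_, C, hC, fun f hf => bound f (mem_ker_shift.2 hf)⟩
  · exact congrArg Subtype.val (@inj ⟨f, mem_ker_shift.2 hf⟩ ⟨g, mem_ker_shift.2 hg⟩ hfg)
  · obtain ⟨f, hf⟩ := surj h
    exact ⟨f, mem_ker_shift.1 f.2, hf⟩

end Green

theorem stmt6
    (S St T Tt : H →ₗ.[ℂ] H)
    (Γ0 Γ1 : T.domain →ₗ[ℂ] G) (Γt0 Γt1 : Tt.domain →ₗ[ℂ] G)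
    (hgbt : IsGeneralizedBoundaryTriple S St T Tt Γ0 Γ1 Γt0 Γt1)
    (lam mu : ℂ)
    (hlam : InResolventSet (T.restrictTo (LinearMap.ker Γ0)) lam)
    (hmu : InResolventSet (Tt.restrictTo (LinearMap.ker Γt0)) mu) :
    ((∀ f g : T.domain, T f = lam • (f : H) → T g = lam • (g : H) → Γ0 f = Γ0 g → f = g) ∧
      (∀ h : G, ∃ f : T.domain, T f = lam • (f : H) ∧ Γ0 f = h) ∧
      (∃ C : ℝ, 0 ≤ C ∧ ∀ f : T.domain, T f = lam • (f : H) → ‖(f : H)‖ ≤ C * ‖Γ0 f‖)) ∧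
    ((∀ f g : Tt.domain, Tt f = mu • (f : H) → Tt g = mu • (g : H) → Γt0 f = Γt0 g → f = g) ∧
      (∀ h : G, ∃ g : Tt.domain, Tt g = mu • (g : H) ∧ Γt0 g = h) ∧
      (∃ C : ℝ, 0 ≤ C ∧ ∀ g : Tt.domain, Tt g = mu • (g : H) → ‖(g : H)‖ ≤ C * ‖Γt0 g‖)) := by
  exact ⟨stmt6_general hgbt.green hgbt.surj_Γ0 hgbt.A0_adjoint hgbt.At0_adjoint hlam,
    stmt6_general (GreenIdentity.symm hgbt.green) hgbt.surj_Γt0 hgbt.At0_adjoint hgbt.A0_adjoint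
      hmu⟩

end
end

section
/- Let {G, (Γ0, Γ1), (Γ̃0, Γ̃1)} be a generalized boundary triple for the adjoint pair {S, S̃} with core {T, T̃} of {S*, S̃*}, assume ρ(A0) ≠ ∅, and let γ, γ̃ and M, M̃ be the associated γ-fields and Weyl functions. Fix λ0 ∈ ρ(A0) ∩ ρ(Ã0). Then for every λ ∈ ρ(A0) and all h, k ∈ G: (M(λ)h, k)_G = (h, M̃(λ0)k)_G + (λ − λ̄0) ( γ(λ0)h + (λ − λ0)(A0 − λ)^{-1} γ(λ0)h , γ̃(λ0)k )_H. -/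
/-! The difference `γ(λ)h - γ(λ₀)h` lies in `ker Γ₀`, and `A₀ - λ` maps it to `(λ - λ₀) γ(λ₀)h`;
applying the resolvent gives `γ(λ)h = γ(λ₀)h + (λ - λ₀)(A₀ - λ)⁻¹ γ(λ₀)h`. The claim is then the
abstract Green identity for `γ(λ)h` and `γ̃(λ₀)k`, whose left-hand side is
`(λ - λ̄₀)(γ(λ)h, γ̃(λ₀)k)`. -/

open scoped ComplexInnerProductSpace

noncomputable section

variable {H G : Type*}
  [NormedAddCommGroup H] [InnerProductSpace ℂ H] [CompleteSpace H]
  [NormedAddCommGroup G] [InnerProductSpace ℂ G] [CompleteSpace G]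

section Eigenvector

variable {K E F : Type*} [Ring K] [AddCommGroup E] [Module K E] [AddCommGroup F] [Module K F]

theorem eigenvector_eq_add_smul_leftInverse {T : E →ₗ.[K] E} {Γ0 : T.domain →ₗ[K] F}
    {lam0 lam : K} {R : E →ₗ[K] E}
    (hR : ∀ x ∈ LinearMap.ker Γ0, R (T x - lam • (x : E)) = x) {f f0 : T.domain}
    (hf : T f = lam • (f : E)) (hf0 : T f0 = lam0 • (f0 : E)) (hΓ : Γ0 f0 = Γ0 f) :
    (f : E) = f0 + (lam - lam0) • R f0 := by
  have hker : f - f0 ∈ LinearMap.ker Γ0 := LinearMap.sub_mem_ker_iff.mpr hΓ.symm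
  have himage : T (f - f0) - lam • ((f - f0 : T.domain) : E) = (lam - lam0) • (f0 : E) := by
    rw [T.map_sub, hf, hf0, Submodule.coe_sub, smul_sub, sub_smul]
    abel
  have hdiff : (lam - lam0) • R f0 = (f : E) - f0 := by
    rw [← map_smul, ← himage, hR _ hker, Submodule.coe_sub]
  rw [hdiff, add_sub_cancel]

end Eigenvector

section InnerProduct

variable {E F : Type*}
  [NormedAddCommGroup E] [InnerProductSpace ℂ E]
  [NormedAddCommGroup F] [InnerProductSpace ℂ F]

theorem pinner_smul_left (c : ℂ) (x y : E) : pinner (c • x) y = c * pinner x y :=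
  inner_smul_right y x c

theorem pinner_smul_right (c : ℂ) (x y : E) :
    pinner x (c • y) = (starRingEnd ℂ) c * pinner x y :=
  inner_smul_left y x c

theorem restrictTo_le (T : E →ₗ.[ℂ] E) (p : Submodule ℂ T.domain) : T.restrictTo p ≤ T := by
  refine ⟨Submodule.map_subtype_le _ p, fun x y hxy => ?_⟩
  let e := Submodule.equivMapOfInjective T.domain.subtype (Submodule.injective_subtype _) p
  have hy : (e.symm x : T.domain) = y :=
    Subtype.ext ((congrArg Subtype.val (e.apply_symm_apply x)).trans hxy)
  exact congrArg T hy

theorem ResolventAt.apply_sub_smul_of_mem {T : E →ₗ.[ℂ] E} {p : Submodule ℂ T.domain} {lam : ℂ}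
    {R : E →L[ℂ] E} (hR : ResolventAt (T.restrictTo p) lam R) {x : T.domain} (hx : x ∈ p) :
    R (T x - lam • (x : E)) = x := by
  let x' : (T.restrictTo p).domain := ⟨x, Submodule.mem_map_of_mem hx⟩
  have hT : T.restrictTo p x' = T x := (restrictTo_le T p).2 rfl
  exact hT ▸ hR.1 x'

/-- The abstract Green identity relating operators `T`, `Tt` in `E` to boundary maps into `F`: the
field `IsGeneralizedBoundaryTriple.green` as a property of its own. -/
def AbstractGreenIdentity {T Tt : E →ₗ.[ℂ] E} (Γ0 Γ1 : T.domain →ₗ[ℂ] F)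
    (Γt0 Γt1 : Tt.domain →ₗ[ℂ] F) : Prop :=
  ∀ (f : T.domain) (g : Tt.domain),
    pinner (T f) (g : E) - pinner (f : E) (Tt g)
      = pinner (Γ1 f) (Γt0 g) - pinner (Γ0 f) (Γt1 g)

variable {T Tt : E →ₗ.[ℂ] E} {Γ0 Γ1 : T.domain →ₗ[ℂ] F} {Γt0 Γt1 : Tt.domain →ₗ[ℂ] F}

theorem AbstractGreenIdentity.pinner_eq_of_eigenvectors
    (hgreen : AbstractGreenIdentity Γ0 Γ1 Γt0 Γt1) {lam mu : ℂ} {f : T.domain} {g : Tt.domain}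
    (hf : T f = lam • (f : E)) (hg : Tt g = mu • (g : E)) :
    pinner (Γ1 f) (Γt0 g)
      = pinner (Γ0 f) (Γt1 g) + (lam - (starRingEnd ℂ) mu) * pinner (f : E) g := by
  have hfg := hgreen f g
  rw [hf, hg, pinner_smul_left, pinner_smul_right, ← sub_mul] at hfg
  rw [hfg, add_sub_cancel]

theorem stmt11_general (hgreen : AbstractGreenIdentity Γ0 Γ1 Γt0 Γt1) {lam0 lam mu : ℂ}
    {R : E →ₗ[ℂ] E} (hR : ∀ x ∈ LinearMap.ker Γ0, R (T x - lam • (x : E)) = x)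
    {f f0 : T.domain} {g : Tt.domain}
    (hf : T f = lam • (f : E)) (hf0 : T f0 = lam0 • (f0 : E)) (hΓ : Γ0 f0 = Γ0 f)
    (hg : Tt g = mu • (g : E)) :
    pinner (Γ1 f) (Γt0 g)
      = pinner (Γ0 f) (Γt1 g)
        + (lam - (starRingEnd ℂ) mu) * pinner ((f0 : E) + (lam - lam0) • R f0) g := by
  rw [← eigenvector_eq_add_smul_leftInverse hR hf hf0 hΓ]
  exact hgreen.pinner_eq_of_eigenvectors hf hg

end InnerProduct

theorem stmt11
    (S St T Tt : H →ₗ.[ℂ] H)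
    (Γ0 Γ1 : T.domain →ₗ[ℂ] G) (Γt0 Γt1 : Tt.domain →ₗ[ℂ] G)
    (hgbt : IsGeneralizedBoundaryTriple S St T Tt Γ0 Γ1 Γt0 Γt1)
    (lam0 lam : ℂ) (Rlam : H →L[ℂ] H)
    (hlam0 : InResolventSet (T.restrictTo (LinearMap.ker Γ0)) lam0)
    (hlam0t : InResolventSet (Tt.restrictTo (LinearMap.ker Γt0)) lam0)
    (hRlam : ResolventAt (T.restrictTo (LinearMap.ker Γ0)) lam Rlam) :
    ∀ (h k : G) (fl f0 : T.domain) (g0 : Tt.domain),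
      T fl = lam • (fl : H) → Γ0 fl = h →
      T f0 = lam0 • (f0 : H) → Γ0 f0 = h →
      Tt g0 = lam0 • (g0 : H) → Γt0 g0 = k →
      pinner (Γ1 fl) k
        = pinner h (Γt1 g0)
          + (lam - (starRingEnd ℂ) lam0)
            * pinner ((f0 : H) + (lam - lam0) • Rlam (f0 : H)) ((g0 : H)) := by
  rintro _ _ fl f0 g0 hfl rfl hf0 hΓ hg0 rfl
  exact stmt11_general hgbt.green (R := Rlam) (fun _ => hRlam.apply_sub_smul_of_mem) hfl hf0 hΓ hg0

end
end
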